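/- Let κ, μ be complex numbers with Re(μ + κ + 1/2) > 0 and Re(μ − κ + 1/2) > 0, and define for z > 0: y(z) = √z · ∫₀¹ ξ^{(−κ+1/2)/2 − 1} (1−ξ)^{(κ+1/2)/2 − 1} e^{(ξ−1/2)z} J_μ(√(ξ(1−ξ)) · z) dξ. Then y satisfies the Whittaker differential equation y''(z) + (−1/4 + κ/z + (1/4 − μ²)/z²) · y(z) = 0 for all z > 0. -/

import Mathlib

/-- Bessel function of the first kind `J_ν(z)` of complex order. -/
noncomputable def besselJ (ν z : ℂ) : ℂ :=
  ∑' n : ℕ, ((-1 : ℂ) ^ n / (Complex.Gamma (ν + n + 1) * n.factorial)) * (z / 2) ^ (ν + 2 * n)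

/-!
Write `C_ν` for the entire function with `J_ν(z) = (z / 2) ^ ν C_ν(-z² / 4)`, and put
`I(α, β, ν) = ∫₀¹ x ^ (α - 1) (1 - x) ^ (β - 1) e ^ (x z) C_ν(-x (1 - x) z² / 4) dx`.
Since `C_ν' = C_{ν + 1}`, differentiation in `z` only produces integrals of the same kind with
shifted parameters. These satisfy three linear relations, coming from `x + (1 - x) = 1`, from the
contiguous relation `w C_{ν + 2} + (ν + 1) C_{ν + 1} = C_ν`, and from integration by parts; for
`ν = α + β - 1 / 2` they combine to Kummer's equation for `I(α, β, ν)`. Multiplication by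
`z ^ (ν + 1 / 2) e ^ (-z / 2)` turns Kummer's equation into Whittaker's.
-/

open Complex Filter MeasureTheory Set Topology
open scoped Interval

/-- The Bessel–Clifford function `C_ν(w) = ∑ wⁿ / (n! Γ(ν + n + 1))`, encoded as the regularized
hypergeometric function `₀F₁(; ν + 1; w) / Γ(ν + 1)`, which is entire in `w` for every `ν`. -/
noncomputable def besselClifford (ν w : ℂ) : ℂ :=
  regularizedHGFun 0 {ν + 1} w

theorem hasFPowerSeriesOnBall_besselClifford (ν : ℂ) :
    HasFPowerSeriesOnBall (besselClifford ν) (regularizedHGFunSeries 0 {ν + 1}) 0 ⊤ := by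
  have hradius : (regularizedHGFunSeries 0 {ν + 1}).radius = ⊤ :=
    radius_regularizedHGFunSeries_eq_top (by simp)
  exact hradius ▸ (regularizedHGFunSeries 0 {ν + 1}).hasFPowerSeriesOnBall (by simp [hradius])

theorem hasSum_besselClifford (ν w : ℂ) :
    HasSum (fun n : ℕ => w ^ n / (n.factorial * Gamma (ν + 1 + n))) (besselClifford ν w) := by
  have h := (hasFPowerSeriesOnBall_besselClifford ν).hasSum (y := w) (by simp)
  simpa [regularizedHGFunCoeff, FormalMultilinearSeries.apply_eq_pow_smul_coeff, div_eq_mul_inv]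
    using h

theorem hasDerivAt_besselClifford (ν w : ℂ) :
    HasDerivAt (besselClifford ν) (besselClifford (ν + 1) w) w := by
  have hν := hasFPowerSeriesOnBall_besselClifford ν
  have hdiff : DifferentiableAt ℂ (besselClifford ν) w :=
    (hν.analyticAt_of_mem (by simp)).differentiableAt
  have hderiv : HasSum (fun n : ℕ => w ^ n / (n.factorial * Gamma (ν + 1 + 1 + n)))
      (deriv (besselClifford ν) w) := by
    have h := (hν.fderiv.hasSum (y := w) (by simp)).mapL
      (ContinuousLinearMap.apply ℂ ℂ (1 : ℂ))
    simp only [FormalMultilinearSeries.apply_eq_pow_smul_coeff, map_smul,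
      ContinuousLinearMap.apply_apply, FormalMultilinearSeries.derivSeries_coeff_one, zero_add,
      fderiv_apply_one_eq_deriv] at h
    refine h.congr_fun fun n => ?_
    rw [add_assoc (ν + 1), add_comm 1 (n : ℂ)]
    simp only [regularizedHGFunSeries_coeff, regularizedHGFunCoeff, Multiset.map_zero,
      Multiset.prod_zero, Nat.factorial_succ, Nat.cast_mul, Nat.cast_add, Nat.cast_one,
      Multiset.map_singleton, Multiset.prod_singleton, one_div, mul_inv_rev, nsmul_eq_mul,
      smul_eq_mul]
    field_simp
  exact (hasSum_besselClifford (ν + 1) w).unique hderiv ▸ hdiff.hasDerivAt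

theorem besselClifford_contiguous (ν w : ℂ) :
    w * besselClifford (ν + 2) w + (ν + 1) * besselClifford (ν + 1) w = besselClifford ν w := by
  have hshift : HasSum (fun n : ℕ => n * w ^ n / (n.factorial * Gamma (ν + 2 + n)))
      (w * besselClifford (ν + 2) w) := by
    rw [← hasSum_nat_add_iff' 1]
    simp only [Finset.sum_range_one, Nat.cast_zero, zero_mul, zero_div, sub_zero]
    refine ((hasSum_besselClifford (ν + 2) w).mul_left w).congr_fun fun n => ?_
    have hGamma : ν + 2 + (n + 1 : ℕ) = ν + 2 + 1 + n := by push_cast; ring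
    rw [hGamma, Nat.factorial_succ]
    push_cast
    field_simp
    ring
  refine ((hshift.add ((hasSum_besselClifford (ν + 1) w).mul_left (ν + 1))).congr_fun
    fun n => ?_).unique (hasSum_besselClifford ν w)
  have hGamma := one_div_Gamma_eq_self_mul_one_div_Gamma_add_one (ν + 1 + n)
  rw [div_mul_eq_div_div, div_eq_mul_inv _ (Gamma _), hGamma]
  ring_nf

theorem besselJ_eq_besselClifford (ν : ℂ) {z : ℂ} (hz : z ≠ 0) :
    besselJ ν z = (z / 2) ^ ν * besselClifford ν (-(z ^ 2 / 4)) := by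
  rw [besselJ, ← (hasSum_besselClifford ν _).tsum_eq, ← tsum_mul_left]
  refine tsum_congr fun n => ?_
  have hpow : (z / 2) ^ (2 * (n : ℂ)) = (z ^ 2 / 4) ^ n := by
    rw [← Nat.cast_ofNat, ← Nat.cast_mul, cpow_natCast, pow_mul, div_pow]
    norm_num
  rw [cpow_add _ _ (div_ne_zero hz two_ne_zero), hpow, neg_pow (z ^ 2 / 4), add_right_comm]
  ring

theorem continuous_besselClifford (ν : ℂ) : Continuous (besselClifford ν) :=
  continuous_iff_continuousAt.2 fun w => (hasDerivAt_besselClifford ν w).continuousAt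

/-- The kernel `e ^ (x z) C_ν(-x (1 - x) z² / 4)`: up to elementary factors it is
`e ^ (x z) J_ν(√(x (1 - x)) z)`, but it is entire in both variables. -/
noncomputable def expBesselClifford (ν x z : ℂ) : ℂ :=
  exp (x * z) * besselClifford ν (-(x * (1 - x) * z ^ 2 / 4))

@[fun_prop]
theorem continuous_expBesselClifford {X : Type*} [TopologicalSpace X] (ν : ℂ) {f g : X → ℂ}
    (hf : Continuous f) (hg : Continuous g) :
    Continuous fun p => expBesselClifford ν (f p) (g p) := by
  have := continuous_besselClifford ν
  unfold expBesselClifford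
  fun_prop

theorem hasDerivAt_expBesselClifford_right (ν x z : ℂ) :
    HasDerivAt (expBesselClifford ν x) (x * expBesselClifford ν x z -
      z / 2 * (x * (1 - x) * expBesselClifford (ν + 1) x z)) z := by
  have hexp : HasDerivAt (fun u => exp (x * u)) (exp (x * z) * x) z := by
    simpa using ((hasDerivAt_id z).const_mul x).cexp
  have harg : HasDerivAt (fun u => -(x * (1 - x) * u ^ 2 / 4)) (-(x * (1 - x) * z / 2)) z := by
    refine (((hasDerivAt_pow 2 z).const_mul (x * (1 - x))).div_const 4).neg.congr_deriv ?_
    push_cast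
    ring
  refine (hexp.mul ((hasDerivAt_besselClifford ν _).comp z harg)).congr_deriv ?_
  simp only [expBesselClifford, Function.comp]
  ring

theorem hasDerivAt_expBesselClifford_left (ν x z : ℂ) :
    HasDerivAt (expBesselClifford ν · z) (z * expBesselClifford ν x z -
      z ^ 2 / 4 * ((1 - 2 * x) * expBesselClifford (ν + 1) x z)) x := by
  have hexp : HasDerivAt (fun u => exp (u * z)) (exp (x * z) * z) x := by
    simpa using ((hasDerivAt_id x).mul_const z).cexp
  have harg : HasDerivAt (fun u => -(u * (1 - u) * z ^ 2 / 4)) (-((1 - 2 * x) * z ^ 2 / 4)) x := by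
    refine ((((hasDerivAt_id x).mul ((hasDerivAt_id x).const_sub 1)).mul_const
      (z ^ 2)).div_const 4).neg.congr_deriv ?_
    simp only [id]
    ring
  refine (hexp.mul ((hasDerivAt_besselClifford ν _).comp x harg)).congr_deriv ?_
  simp only [expBesselClifford, Function.comp]
  ring

theorem expBesselClifford_contiguous (ν x z : ℂ) :
    (ν + 1) * expBesselClifford (ν + 1) x z -
      z ^ 2 / 4 * (x * (1 - x) * expBesselClifford (ν + 2) x z) = expBesselClifford ν x z := by
  simp only [expBesselClifford]
  linear_combination exp (x * z) * besselClifford_contiguous ν (-(x * (1 - x) * z ^ 2 / 4))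

theorem re_add_one_pos {α : ℂ} (hα : 0 < α.re) : 0 < (α + 1).re := by
  simpa using add_pos hα one_pos

/-- The integrand of the beta integral `B(α, β)`, serving as a weight on `[0, 1]`. -/
noncomputable def betaDensity (α β x : ℂ) : ℂ :=
  x ^ (α - 1) * (1 - x) ^ (β - 1)

theorem mul_betaDensity {α : ℂ} (hα : α ≠ 0) (β x : ℂ) :
    x * betaDensity α β x = betaDensity (α + 1) β x := by
  obtain rfl | hx := eq_or_ne x 0
  · simp [betaDensity, hα]
  · rw [betaDensity, betaDensity, add_sub_right_comm, cpow_add _ _ hx, cpow_one]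
    ring

theorem one_sub_mul_betaDensity (α : ℂ) {β : ℂ} (hβ : β ≠ 0) (x : ℂ) :
    (1 - x) * betaDensity α β x = betaDensity α (β + 1) x := by
  have h := mul_betaDensity hβ α (1 - x)
  simp only [betaDensity, sub_sub_cancel] at h ⊢
  linear_combination h

theorem intervalIntegrable_betaDensity {α β : ℂ} (hα : 0 < α.re) (hβ : 0 < β.re) :
    IntervalIntegrable (fun x : ℝ => betaDensity α β x) volume 0 1 :=
  betaIntegral_convergent hα hβ

theorem continuous_betaDensity_add_one {α β : ℂ} (hα : 0 < α.re) (hβ : 0 < β.re) :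
    Continuous fun x : ℝ => betaDensity (α + 1) (β + 1) x := by
  have hleft := continuous_ofReal_cpow_const hα
  have hright := (continuous_ofReal_cpow_const hβ).comp (continuous_const.sub continuous_id :
    Continuous fun x : ℝ => 1 - x)
  exact (hleft.mul hright).congr fun x => by simp [betaDensity]

theorem hasDerivAt_betaDensity_add_one (α β : ℂ) {x : ℝ} (hx : x ∈ Ioo 0 1) :
    HasDerivAt (fun x : ℝ => betaDensity (α + 1) (β + 1) x)
      (α * betaDensity α (β + 1) x - β * betaDensity (α + 1) β x) x := by
  have hleft : (x : ℂ) ∈ slitPlane := ofReal_mem_slitPlane.2 hx.1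
  have hright : 1 - (x : ℂ) ∈ slitPlane := by
    exact_mod_cast ofReal_mem_slitPlane.2 (sub_pos.2 hx.2)
  refine (((hasDerivAt_id (x : ℂ)).cpow_const (c := α + 1 - 1) hleft).mul
    (((hasDerivAt_id (x : ℂ)).const_sub 1).cpow_const
      (c := β + 1 - 1) hright)).comp_ofReal.congr_deriv ?_
  simp only [betaDensity, id, add_sub_cancel_right]
  ring

theorem integral_betaDensity_mul_deriv {α β : ℂ} (hα : 0 < α.re) (hβ : 0 < β.re) {g g' : ℝ → ℂ}
    (hg : ContinuousOn g (Icc 0 1)) (hg' : ContinuousOn g' (Icc 0 1))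
    (hderiv : ∀ x ∈ Ioo 0 1, HasDerivAt g (g' x) x) :
    ∫ x in (0 : ℝ)..1, ((α * betaDensity α (β + 1) x - β * betaDensity (α + 1) β x) * g x +
      betaDensity (α + 1) (β + 1) x * g' x) = 0 := by
  have hα1 := re_add_one_pos hα
  have hβ1 := re_add_one_pos hβ
  rw [← uIcc_of_le zero_le_one] at hg hg'
  rw [intervalIntegral.integral_eq_sub_of_hasDerivAt_of_le zero_le_one
    ((continuous_betaDensity_add_one hα hβ).continuousOn.mul (uIcc_of_le (zero_le_one' ℝ) ▸ hg))
    fun x hx => (hasDerivAt_betaDensity_add_one α β hx).mul (hderiv x hx)]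
  · simp [betaDensity, ne_zero_of_re_pos hα, ne_zero_of_re_pos hβ]
  · exact ((((intervalIntegrable_betaDensity hα hβ1).const_mul α).sub
      ((intervalIntegrable_betaDensity hα1 hβ).const_mul β)).mul_continuousOn hg).add
      ((intervalIntegrable_betaDensity hα1 hβ1).mul_continuousOn hg')

theorem hasDerivAt_intervalIntegral_mul {𝕜 : Type*} [RCLike 𝕜] {ν : Measure ℝ} {a b : ℝ}
    {φ : ℝ → 𝕜} (hφ : IntervalIntegrable φ ν a b) {f f' : ℝ → 𝕜 → 𝕜}
    (hf : ∀ z, ContinuousOn (f · z) [[a, b]])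
    (hf' : ContinuousOn (Function.uncurry f') ([[a, b]] ×ˢ univ))
    (hderiv : ∀ x ∈ [[a, b]], ∀ z, HasDerivAt (f x) (f' x z) z) (z : 𝕜) :
    HasDerivAt (fun z => ∫ x in a..b, φ x * f x z ∂ν) (∫ x in a..b, φ x * f' x z ∂ν) z := by
  have hint {g : ℝ → 𝕜} (hg : ContinuousOn g [[a, b]]) :
      IntervalIntegrable (fun x => φ x * g x) ν a b := hφ.mul_continuousOn hg
  have hf'z : ContinuousOn (f' · z) [[a, b]] :=
    hf'.comp (by fun_prop : ContinuousOn (fun x : ℝ => (x, z)) _) fun x hx => ⟨hx, mem_univ _⟩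
  obtain ⟨C, hC⟩ := (isCompact_uIcc.prod (isCompact_closedBall z 1)).exists_bound_of_continuousOn
    (hf'.mono (prod_mono_right (subset_univ _)))
  refine (intervalIntegral.hasDerivAt_integral_of_dominated_loc_of_deriv_le
    (F := fun z x => φ x * f x z) (F' := fun z x => φ x * f' x z) (bound := fun x => ‖φ x‖ * C)
    (Metric.ball_mem_nhds z one_pos) ?_ (hint (hf z)) (hint hf'z).def'.aestronglyMeasurable ?_
    (hφ.norm.mul_const C) ?_).2
  · exact Eventually.of_forall fun u => (hint (hf u)).def'.aestronglyMeasurable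
  · refine Eventually.of_forall fun x hx u hu => ?_
    rw [norm_mul]
    gcongr
    exact hC (x, u) ⟨uIoc_subset_uIcc hx, Metric.ball_subset_closedBall hu⟩
  · exact Eventually.of_forall fun x hx u _ =>
      (hderiv x (uIoc_subset_uIcc hx) u).const_mul _

/-- The integral `I(α, β, ν)` of the kernel `expBesselClifford ν · z` against the beta weight, as a
function of `z`; up to elementary factors, the solution of Whittaker's equation for suitable
parameters. -/
noncomputable def betaBesselIntegral (α β ν z : ℂ) : ℂ :=
  ∫ x in (0 : ℝ)..1, betaDensity α β x * expBesselClifford ν x z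

theorem intervalIntegrable_betaDensity_mul_expBesselClifford {α β : ℂ} (hα : 0 < α.re)
    (hβ : 0 < β.re) (ν z : ℂ) :
    IntervalIntegrable (fun x : ℝ => betaDensity α β x * expBesselClifford ν x z) volume 0 1 :=
  (intervalIntegrable_betaDensity hα hβ).mul_continuousOn (by fun_prop)

theorem betaBesselIntegral_add_one_add_add_one {α β : ℂ} (hα : 0 < α.re) (hβ : 0 < β.re) (ν z : ℂ) :
    betaBesselIntegral (α + 1) β ν z + betaBesselIntegral α (β + 1) ν z =
      betaBesselIntegral α β ν z := by
  have hα0 : α ≠ 0 := ne_zero_of_re_pos hα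
  have hβ0 : β ≠ 0 := ne_zero_of_re_pos hβ
  have hα1 := re_add_one_pos hα
  have hβ1 := re_add_one_pos hβ
  unfold betaBesselIntegral
  rw [← intervalIntegral.integral_add
    (intervalIntegrable_betaDensity_mul_expBesselClifford hα1 hβ ν z)
    (intervalIntegrable_betaDensity_mul_expBesselClifford hα hβ1 ν z)]
  refine intervalIntegral.integral_congr fun x _ => ?_
  simp only [← mul_betaDensity hα0, ← one_sub_mul_betaDensity _ hβ0]
  ring

theorem betaBesselIntegral_contiguous {α β : ℂ} (hα : 0 < α.re) (hβ : 0 < β.re) (ν z : ℂ) :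
    (ν + 1) * betaBesselIntegral α β (ν + 1) z -
      z ^ 2 / 4 * betaBesselIntegral (α + 1) (β + 1) (ν + 2) z = betaBesselIntegral α β ν z := by
  have hα1 := re_add_one_pos hα
  have hβ1 := re_add_one_pos hβ
  unfold betaBesselIntegral
  rw [← intervalIntegral.integral_const_mul, ← intervalIntegral.integral_const_mul,
    ← intervalIntegral.integral_sub
    ((intervalIntegrable_betaDensity_mul_expBesselClifford hα hβ _ z).const_mul _)
    ((intervalIntegrable_betaDensity_mul_expBesselClifford hα1 hβ1 _ z).const_mul _)]
  refine intervalIntegral.integral_congr fun x _ => ?_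
  simp only [← mul_betaDensity (ne_zero_of_re_pos hα),
    ← one_sub_mul_betaDensity _ (ne_zero_of_re_pos hβ)]
  linear_combination betaDensity α β x * expBesselClifford_contiguous ν x z

theorem hasDerivAt_betaBesselIntegral {α β : ℂ} (hα : 0 < α.re) (hβ : 0 < β.re) (ν z : ℂ) :
    HasDerivAt (betaBesselIntegral α β ν) (betaBesselIntegral (α + 1) β ν z -
      z / 2 * betaBesselIntegral (α + 1) (β + 1) (ν + 1) z) z := by
  have hα1 := re_add_one_pos hα
  have hβ1 := re_add_one_pos hβ
  refine (hasDerivAt_intervalIntegral_mul (intervalIntegrable_betaDensity hα hβ)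
    (f := fun x => expBesselClifford ν x) (fun _ => by fun_prop) ?_
    (fun x _ u => hasDerivAt_expBesselClifford_right ν x u) z).congr_deriv ?_
  · unfold Function.uncurry
    fun_prop
  unfold betaBesselIntegral
  rw [← intervalIntegral.integral_const_mul, ← intervalIntegral.integral_sub
    (intervalIntegrable_betaDensity_mul_expBesselClifford hα1 hβ _ z)
    ((intervalIntegrable_betaDensity_mul_expBesselClifford hα1 hβ1 _ z).const_mul _)]
  refine intervalIntegral.integral_congr fun x _ => ?_
  simp only [← mul_betaDensity (ne_zero_of_re_pos hα),
    ← one_sub_mul_betaDensity _ (ne_zero_of_re_pos hβ)]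
  ring

theorem betaBesselIntegral_by_parts {α β : ℂ} (hα : 0 < α.re) (hβ : 0 < β.re) (ν z : ℂ) :
    α * betaBesselIntegral α (β + 1) ν z - β * betaBesselIntegral (α + 1) β ν z +
      z * betaBesselIntegral (α + 1) (β + 1) ν z =
      z ^ 2 / 4 * (betaBesselIntegral (α + 1) (β + 1 + 1) (ν + 1) z -
        betaBesselIntegral (α + 1 + 1) (β + 1) (ν + 1) z) := by
  have hα1 := re_add_one_pos hα
  have hβ1 := re_add_one_pos hβ
  have hint {a b : ℂ} (ha : 0 < a.re) (hb : 0 < b.re) (ν' c : ℂ) :=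
    (intervalIntegrable_betaDensity_mul_expBesselClifford ha hb ν' z).const_mul c
  have hparts := integral_betaDensity_mul_deriv hα hβ
    (g := fun x => expBesselClifford ν x z) (by fun_prop) (by fun_prop)
    fun x _ => (hasDerivAt_expBesselClifford_left ν x z).comp_ofReal
  rw [← sub_eq_zero, ← hparts, mul_sub]
  simp only [betaBesselIntegral, ← intervalIntegral.integral_const_mul]
  rw [← intervalIntegral.integral_sub (hint hα hβ1 _ _) (hint hα1 hβ _ _),
    ← intervalIntegral.integral_add ((hint hα hβ1 _ _).sub (hint hα1 hβ _ _)) (hint hα1 hβ1 _ _),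
    ← intervalIntegral.integral_sub (hint hα1 (re_add_one_pos hβ1) _ _)
      (hint (re_add_one_pos hα1) hβ1 _ _),
    ← intervalIntegral.integral_sub
      (((hint hα hβ1 _ _).sub (hint hα1 hβ _ _)).add (hint hα1 hβ1 _ _))
      ((hint hα1 (re_add_one_pos hβ1) _ _).sub (hint (re_add_one_pos hα1) hβ1 _ _))]
  refine intervalIntegral.integral_congr fun x _ => ?_
  simp only [← mul_betaDensity (ne_zero_of_re_pos hα1),
    ← one_sub_mul_betaDensity _ (ne_zero_of_re_pos hβ1)]
  ring

theorem differentiable_betaBesselIntegral {α β : ℂ} (hα : 0 < α.re) (hβ : 0 < β.re) (ν : ℂ) :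
    Differentiable ℂ (betaBesselIntegral α β ν) :=
  fun z => (hasDerivAt_betaBesselIntegral hα hβ ν z).differentiableAt

theorem deriv_deriv_betaBesselIntegral {α β : ℂ} (hα : 0 < α.re) (hβ : 0 < β.re) (ν z : ℂ) :
    deriv (deriv (betaBesselIntegral α β ν)) z = betaBesselIntegral (α + 1 + 1) β ν z -
      z * betaBesselIntegral (α + 1 + 1) (β + 1) (ν + 1) z -
      1 / 2 * betaBesselIntegral (α + 1) (β + 1) (ν + 1) z +
      z ^ 2 / 4 * betaBesselIntegral (α + 1 + 1) (β + 1 + 1) (ν + 2) z := by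
  have hα1 := re_add_one_pos hα
  have hderiv : deriv (betaBesselIntegral α β ν) = fun u => betaBesselIntegral (α + 1) β ν u -
      u / 2 * betaBesselIntegral (α + 1) (β + 1) (ν + 1) u :=
    funext fun u => (hasDerivAt_betaBesselIntegral hα hβ ν u).deriv
  have hfirst := hasDerivAt_betaBesselIntegral hα1 hβ ν z
  have hsecond := ((hasDerivAt_id z).div_const 2).mul
    (hasDerivAt_betaBesselIntegral hα1 (re_add_one_pos hβ) (ν + 1) z)
  rw [add_assoc ν, one_add_one_eq_two] at hsecond
  rw [hderiv]
  refine (hfirst.sub hsecond).deriv.trans ?_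
  simp only [id]
  ring

theorem betaBesselIntegral_kummer {α β ν : ℂ} (hα : 0 < α.re) (hβ : 0 < β.re)
    (hν : ν = α + β - 1 / 2) (z : ℂ) :
    z * deriv (deriv (betaBesselIntegral α β ν)) z +
      (2 * (α + β) - z) * deriv (betaBesselIntegral α β ν) z -
      2 * α * betaBesselIntegral α β ν z = 0 := by
  have hα1 := re_add_one_pos hα
  have hβ1 := re_add_one_pos hβ
  have hparts := betaBesselIntegral_by_parts hα hβ ν z
  have hcontiguous := betaBesselIntegral_contiguous hα1 hβ1 ν z
  have hsplit₀₀ := betaBesselIntegral_add_one_add_add_one hα hβ ν z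
  have hsplit₁₀ := betaBesselIntegral_add_one_add_add_one hα1 hβ ν z
  have hsplit₁₁ := betaBesselIntegral_add_one_add_add_one hα1 hβ1 (ν + 1) z
  rw [deriv_deriv_betaBesselIntegral hα hβ, (hasDerivAt_betaBesselIntegral hα hβ ν z).deriv]
  linear_combination -2 * hparts - z * hcontiguous + 2 * α * hsplit₀₀ + z * hsplit₁₀ -
    z ^ 2 / 2 * hsplit₁₁ + z * betaBesselIntegral (α + 1) (β + 1) (ν + 1) z * hν

/-- The factor `z ^ (μ + 1 / 2) e^{-z / 2}` turning solutions of Kummer's equation into solutions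
of Whittaker's equation. -/
noncomputable def whittakerFactor (μ z : ℂ) : ℂ :=
  z ^ (μ + 1 / 2) * exp (-z / 2)

theorem hasDerivAt_whittakerFactor (μ : ℂ) {z : ℂ} (hz : z ∈ slitPlane) :
    HasDerivAt (whittakerFactor μ) (whittakerFactor μ z * ((μ + 1 / 2) / z - 1 / 2)) z := by
  have hz0 : z ≠ 0 := slitPlane_ne_zero hz
  refine (((hasDerivAt_id z).cpow_const (c := μ + 1 / 2) hz).mul
    ((hasDerivAt_id z).neg.div_const 2).cexp).congr_deriv ?_
  simp only [whittakerFactor, id, Pi.neg_apply, cpow_sub _ _ hz0, cpow_one]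
  ring

theorem analyticAt_whittakerFactor (μ : ℂ) {z : ℂ} (hz : z ∈ slitPlane) :
    AnalyticAt ℂ (whittakerFactor μ) z :=
  DifferentiableOn.analyticAt (fun _ hu =>
    (hasDerivAt_whittakerFactor μ hu).differentiableAt.differentiableWithinAt)
    (isOpen_slitPlane.mem_nhds hz)

theorem whittaker_of_kummer (κ μ : ℂ) {M : ℂ → ℂ} {z : ℂ} (hz : z ∈ slitPlane)
    (hM : AnalyticAt ℂ M z)
    (hkummer : z * deriv (deriv M) z + (2 * μ + 1 - z) * deriv M z -
      (μ - κ + 1 / 2) * M z = 0) :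
    deriv (deriv fun u => whittakerFactor μ u * M u) z +
      (-(1 / 4) + κ / z + (1 / 4 - μ ^ 2) / z ^ 2) * (whittakerFactor μ z * M z) = 0 := by
  have hz0 : z ≠ 0 := slitPlane_ne_zero hz
  have hfactor := hasDerivAt_whittakerFactor μ hz
  have hderiv : deriv (fun u => whittakerFactor μ u * M u) =ᶠ[𝓝 z] fun u =>
      whittakerFactor μ u * (((μ + 1 / 2) / u - 1 / 2) * M u + deriv M u) := by
    filter_upwards [isOpen_slitPlane.mem_nhds hz, hM.eventually_analyticAt] with u hu hMu
    refine ((hasDerivAt_whittakerFactor μ hu).mul hMu.differentiableAt.hasDerivAt).deriv.trans ?_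
    ring
  have hlog : HasDerivAt (fun u => (μ + 1 / 2) / u - 1 / 2) (-(μ + 1 / 2) / z ^ 2) z := by
    refine (((hasDerivAt_inv hz0).const_mul (μ + 1 / 2)).sub_const (1 / 2)).congr_deriv ?_
    ring
  have hderiv2 := hfactor.mul ((hlog.mul hM.differentiableAt.hasDerivAt).add
    hM.deriv.differentiableAt.hasDerivAt)
  rw [hderiv.deriv_eq]
  refine (congrArg (· + _) hderiv2.deriv).trans ?_
  simp only [Pi.add_apply, Pi.mul_apply]
  linear_combination (norm := (field_simp; ring)) whittakerFactor μ z / z * hkummer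

theorem deriv_deriv_comp_ofReal {f : ℂ → ℂ} {t : ℝ} (hf : AnalyticAt ℂ f t) :
    deriv (deriv fun s : ℝ => f s) t = deriv (deriv f) t := by
  have hderiv : deriv (fun s : ℝ => f s) =ᶠ[𝓝 t] fun s : ℝ => deriv f s := by
    filter_upwards [continuous_ofReal.continuousAt.eventually hf.eventually_analyticAt] with s hs
    exact hs.differentiableAt.hasDerivAt.comp_ofReal.deriv
  rw [hderiv.deriv_eq]
  exact hf.deriv.differentiableAt.hasDerivAt.comp_ofReal.deriv

theorem ofReal_sqrt_cpow (μ : ℂ) {x : ℝ} (hx : 0 < x) : (√x : ℂ) ^ μ = (x : ℂ) ^ (μ / 2) := by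
  rw [cpow_def_of_ne_zero (ofReal_ne_zero.2 hx.ne'),
    cpow_def_of_ne_zero (ofReal_ne_zero.2 (Real.sqrt_pos.2 hx).ne'), ← ofReal_log hx.le,
    ← ofReal_log (Real.sqrt_nonneg x), Real.log_sqrt hx.le]
  push_cast
  ring_nf

theorem exp_mul_besselJ_eq_expBesselClifford (μ : ℂ) {x t : ℝ} (hx : x ∈ Ioo 0 1) (ht : 0 < t) :
    exp ((x - 1 / 2) * t) * besselJ μ (√(x * (1 - x)) * t) =
      (1 / 2) ^ μ * t ^ μ * exp (-t / 2) *
        ((x : ℂ) ^ (μ / 2) * (1 - x) ^ (μ / 2) * expBesselClifford μ x t) := by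
  have hx1 : 0 < 1 - x := sub_pos.2 hx.2
  have hxx : 0 < x * (1 - x) := mul_pos hx.1 hx1
  have harg : (√(x * (1 - x)) : ℂ) * t ≠ 0 := by
    exact_mod_cast (mul_pos (Real.sqrt_pos.2 hxx) ht).ne'
  have hsq : (√(x * (1 - x)) : ℂ) ^ 2 = x * (1 - x) := by
    exact_mod_cast congrArg ofReal (Real.sq_sqrt hxx.le)
  have hpow : ((√(x * (1 - x)) : ℂ) * t / 2) ^ μ =
      (1 / 2) ^ μ * t ^ μ * (x ^ (μ / 2) * (1 - x) ^ (μ / 2)) := by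
    have hhalf : (√(x * (1 - x)) : ℂ) * t / 2 = √(x * (1 - x)) * ((t * (1 / 2) : ℝ) : ℂ) := by
      push_cast
      ring
    rw [hhalf, mul_cpow_ofReal_nonneg (Real.sqrt_nonneg _) (by positivity), ofReal_sqrt_cpow μ hxx,
      ofReal_mul x, mul_cpow_ofReal_nonneg hx.1.le hx1.le, ofReal_mul t,
      mul_cpow_ofReal_nonneg ht.le (by norm_num)]
    push_cast
    ring
  have hexp : exp ((x - 1 / 2) * t) = exp (-t / 2) * exp (x * t) := by
    rw [← exp_add]
    ring_nf
  rw [besselJ_eq_besselClifford μ harg, hpow, hexp, mul_pow, hsq, expBesselClifford]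
  ring

theorem sqrt_mul_integral_besselJ (a b μ : ℂ) {t : ℝ} (ht : 0 < t) :
    (√t : ℂ) * ∫ x in (0 : ℝ)..1, (x : ℂ) ^ (a - 1) * ((1 : ℂ) - x) ^ (b - 1) *
        exp ((x - 1 / 2) * t) * besselJ μ (√(x * (1 - x)) * t) =
      (1 / 2) ^ μ * (whittakerFactor μ t * betaBesselIntegral (a + μ / 2) (b + μ / 2) μ t) := by
  have hintegrand (x : ℝ) (hx : x ∈ Ioo 0 1) :
      (x : ℂ) ^ (a - 1) * ((1 : ℂ) - x) ^ (b - 1) * exp ((x - 1 / 2) * t) *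
        besselJ μ (√(x * (1 - x)) * t) = (1 / 2) ^ μ * t ^ μ * exp (-t / 2) *
          (betaDensity (a + μ / 2) (b + μ / 2) x * expBesselClifford μ x t) := by
    have hx0 : (x : ℂ) ≠ 0 := ofReal_ne_zero.2 hx.1.ne'
    have hx1 : 1 - (x : ℂ) ≠ 0 := by exact_mod_cast (sub_pos.2 hx.2).ne'
    rw [mul_assoc, exp_mul_besselJ_eq_expBesselClifford μ hx ht, betaDensity, add_sub_right_comm,
      add_sub_right_comm b, cpow_add _ _ hx0, cpow_add _ _ hx1]
    ring
  have hsqrt : (√t : ℂ) = (t : ℂ) ^ (1 / 2 : ℂ) := by simpa using ofReal_sqrt_cpow 1 ht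
  rw [intervalIntegral.integral_congr_Ioo_of_le zero_le_one hintegrand,
    intervalIntegral.integral_const_mul, hsqrt, whittakerFactor,
    cpow_add _ _ (ofReal_ne_zero.2 ht.ne'), betaBesselIntegral]
  ring

/-- The function
`y(z) = √z · ∫₀¹ ξ^{(−κ+1/2)/2−1} (1−ξ)^{(κ+1/2)/2−1} e^{(ξ−1/2)z} J_μ(√(ξ(1−ξ)) z) dξ`
satisfies the Whittaker differential equation
`y'' + (−1/4 + κ/z + (1/4 − μ²)/z²) y = 0` for `z > 0`. -/
theorem whittaker_integral_satisfies_ODE (κ μ : ℂ)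
    (h₁ : 0 < (μ + κ + 1 / 2).re) (h₂ : 0 < (μ - κ + 1 / 2).re) :
    ∀ z : ℝ, 0 < z →
      deriv (deriv (fun t : ℝ => (Real.sqrt t : ℂ) *
          ∫ ξ in (0:ℝ)..1,
            (ξ : ℂ) ^ ((-κ + 1 / 2) / 2 - 1) * ((1 : ℂ) - (ξ : ℂ)) ^ ((κ + 1 / 2) / 2 - 1) *
              Complex.exp (((ξ : ℂ) - 1 / 2) * t) *
              besselJ μ ((Real.sqrt (ξ * (1 - ξ)) : ℂ) * t))) z +
        (-(1 / 4) + κ / (z : ℂ) + (1 / 4 - μ ^ 2) / (z : ℂ) ^ 2) *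
          ((Real.sqrt z : ℂ) *
            ∫ ξ in (0:ℝ)..1,
              (ξ : ℂ) ^ ((-κ + 1 / 2) / 2 - 1) * ((1 : ℂ) - (ξ : ℂ)) ^ ((κ + 1 / 2) / 2 - 1) *
                Complex.exp (((ξ : ℂ) - 1 / 2) * z) *
                besselJ μ ((Real.sqrt (ξ * (1 - ξ)) : ℂ) * z)) = 0 := by
  intro z hz
  set α : ℂ := (-κ + 1 / 2) / 2 + μ / 2
  set β : ℂ := (κ + 1 / 2) / 2 + μ / 2
  have hα : 0 < α.re := by
    rw [show α = (μ - κ + 1 / 2) / 2 by ring, div_ofNat_re]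
    exact half_pos h₂
  have hβ : 0 < β.re := by
    rw [show β = (μ + κ + 1 / 2) / 2 by ring, div_ofNat_re]
    exact half_pos h₁
  have hkummer := betaBesselIntegral_kummer hα hβ (ν := μ) (by ring) z
  have hM := (differentiable_betaBesselIntegral hα hβ μ).analyticAt z
  have hslit : (z : ℂ) ∈ slitPlane := ofReal_mem_slitPlane.2 hz
  have hwhittaker := whittaker_of_kummer κ μ hslit hM (by linear_combination hkummer)
  rw [← deriv_deriv_comp_ofReal ((analyticAt_whittakerFactor μ hslit).fun_mul hM)] at hwhittaker
  have hrepr := fun (t : ℝ) (ht : 0 < t) =>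
    sqrt_mul_integral_besselJ ((-κ + 1 / 2) / 2) ((κ + 1 / 2) / 2) μ ht
  rw [(EventuallyEq.deriv ((eventually_gt_nhds hz).mono hrepr)).deriv_eq, hrepr z hz,
    deriv_const_mul_field', deriv_const_mul_field]
  linear_combination (1 / 2) ^ μ * hwhittaker
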